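/- Assume additionally α ≠ 0 and p ≠ n/2. Then L_2 M = M L_2, where L_2 is the symmetric 2(N+1)×2(N+1) real matrix whose only nonzero entries (1-based indexing, together with the symmetric positions) are, for k = 1, …, N+1: (L_2)_{2k-1,2k-1} = (n-p+k)(p+k-1)/(p(n-p+1)); (L_2)_{2k-1,2k} = (n-p+N+1)(p+N+1)/(α(n-p+1)(n-2p)) · √( (n-p+k)(p+k-1)(n-p) / (p(p+k)(n-p+k-1)) ); and for k = 1, …, N: (L_2)_{2k-1,2k+1} = (N-k+1)(N+n+k+1)/(αp(n-p+1)) · √( k(p+k-1)(n-p+1+k)(n+k) / ((n+2k-1)(n+2k+1)(p+k)(n-p+k)) ). -/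

import Mathlib

open Matrix

/-- Pochhammer symbol `(a)_k = a (a+1) ⋯ (a+k-1)`. -/
noncomputable def poch (a : ℝ) (k : ℕ) : ℝ := ∏ i ∈ Finset.range k, (a + i)

/-- Gegenbauer polynomial `C_w^λ(x)`, with the convention `C_w^λ = 0` for `w < 0`. -/
noncomputable def geg (l : ℝ) (w : ℤ) (x : ℝ) : ℝ :=
  if w < 0 then 0 else
    poch (2 * l) w.toNat / (w.toNat.factorial : ℝ) *
      ∑ k ∈ Finset.range (w.toNat + 1),
        (poch (-(w.toNat : ℝ)) k * poch ((w.toNat : ℝ) + 2 * l) k) /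
            (poch (l + 1 / 2) k * (k.factorial : ℝ)) * ((1 - x) / 2) ^ k

/-- The weight matrix `W_{p,n}(x)`. -/
noncomputable def Wmat (n : ℕ) (p : ℝ) (x : ℝ) : Matrix (Fin 2) (Fin 2) ℝ :=
  (1 - x ^ 2) ^ ((n : ℝ) / 2 - 1) •
    !![p * x ^ 2 + (n : ℝ) - p, -(n : ℝ) * x; -(n : ℝ) * x, ((n : ℝ) - p) * x ^ 2 + p]

/-- The matrix valued polynomial `P_w`. -/
noncomputable def Pmat (n : ℕ) (p : ℝ) (w : ℕ) (x : ℝ) : Matrix (Fin 2) (Fin 2) ℝ :=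
  !![1 / ((n : ℝ) + 1) * geg (((n : ℝ) + 1) / 2) (w : ℤ) x +
        1 / (p + w) * geg (((n : ℝ) + 3) / 2) ((w : ℤ) - 2) x,
      1 / (p + w) * geg (((n : ℝ) + 3) / 2) ((w : ℤ) - 1) x;
      1 / ((n : ℝ) - p + w) * geg (((n : ℝ) + 3) / 2) ((w : ℤ) - 1) x,
      1 / ((n : ℝ) + 1) * geg (((n : ℝ) + 1) / 2) (w : ℤ) x +
        1 / ((n : ℝ) - p + w) * geg (((n : ℝ) + 3) / 2) ((w : ℤ) - 2) x]

/-- The normalizing matrix `S_w`: the (diagonal, positive definite) inverse square root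
of `‖P_w‖² = ∫_{-1}^1 P_w W_{p,n} P_w^T dx`, given explicitly. -/
noncomputable def Smat (n : ℕ) (p : ℝ) (w : ℕ) : Matrix (Fin 2) (Fin 2) ℝ :=
  Real.sqrt (((w.factorial : ℝ) * ((n : ℝ) + 1) * ((n : ℝ) + 2 * w + 1) *
        Real.Gamma ((n : ℝ) / 2 + 3 / 2)) /
      (Real.sqrt Real.pi * 2 ^ (w / 2) * Real.Gamma ((n : ℝ) / 2 + 1 + (w / 2 : ℕ)) *
        ∏ k ∈ Finset.range ((w + 1) / 2), ((n : ℝ) + 2 * k + 1))) •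
    Matrix.diagonal ![Real.sqrt ((p + w) / (p * ((n : ℝ) - p + w + 1))),
      Real.sqrt (((n : ℝ) - p + w) / (((n : ℝ) - p) * (p + w + 1)))]

/-- The orthonormal matrix valued polynomials `Q_w = S_w P_w`. -/
noncomputable def Qmat (n : ℕ) (p : ℝ) (w : ℕ) (x : ℝ) : Matrix (Fin 2) (Fin 2) ℝ :=
  Smat n p w * Pmat n p w x

/-- The `2 × 2` block `M^{i,j} = ∫_{-1}^α Q_i(x) W_{p,n}(x) Q_j(x)^T dx`. -/
noncomputable def Mblk (n : ℕ) (p α : ℝ) (i j : ℕ) : Matrix (Fin 2) (Fin 2) ℝ :=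
  Matrix.of fun a b : Fin 2 =>
    ∫ x in (-1 : ℝ)..α, (Qmat n p i x * Wmat n p x * (Qmat n p j x)ᵀ) a b

/-- The full `2(N+1) × 2(N+1)` matrix `M`, with (1-based) entries
`M_{2i+1,2j+1} = M^{i,j}_{11}`, `M_{2i+1,2j+2} = M^{i,j}_{12}`,
`M_{2i+2,2j+1} = M^{i,j}_{21}`, `M_{2i+2,2j+2} = M^{i,j}_{22}`. -/
noncomputable def Mfull (n : ℕ) (p α : ℝ) (N : ℕ) :
    Matrix (Fin (2 * (N + 1))) (Fin (2 * (N + 1))) ℝ :=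
  Matrix.of fun r c =>
    Mblk n p α (r.val / 2) (c.val / 2) ⟨r.val % 2, by omega⟩ ⟨c.val % 2, by omega⟩

/-- The odd diagonal entries `(L_2)_{2k-1,2k-1}`. -/
noncomputable def L2a (n : ℕ) (p : ℝ) (k : ℕ) : ℝ :=
  ((n : ℝ) - p + k) * (p + k - 1) / (p * ((n : ℝ) - p + 1))

/-- The entries `(L_2)_{2k-1,2k}`. -/
noncomputable def L2b (n : ℕ) (p α : ℝ) (N : ℕ) (k : ℕ) : ℝ :=
  ((n : ℝ) - p + N + 1) * (p + N + 1) / (α * ((n : ℝ) - p + 1) * ((n : ℝ) - 2 * p)) *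
    Real.sqrt (((n : ℝ) - p + k) * (p + k - 1) * ((n : ℝ) - p) /
      (p * (p + k) * ((n : ℝ) - p + k - 1)))

/-- The entries `(L_2)_{2k-1,2k+1}`. -/
noncomputable def L2e (n : ℕ) (p α : ℝ) (N : ℕ) (k : ℕ) : ℝ :=
  ((N : ℝ) - k + 1) * ((N : ℝ) + n + k + 1) / (α * p * ((n : ℝ) - p + 1)) *
    Real.sqrt ((k : ℝ) * (p + k - 1) * ((n : ℝ) - p + 1 + k) * ((n : ℝ) + k) /
      (((n : ℝ) + 2 * k - 1) * ((n : ℝ) + 2 * k + 1) * (p + k) * ((n : ℝ) - p + k)))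

/-- The symmetric matrix `L_2`: in 1-based indexing its only nonzero entries (up to
symmetry) are `(L_2)_{2k-1,2k-1}`, `(L_2)_{2k-1,2k}` for `k = 1, …, N+1`, and
`(L_2)_{2k-1,2k+1}` for `k = 1, …, N`. -/
noncomputable def L2 (n : ℕ) (p α : ℝ) (N : ℕ) :
    Matrix (Fin (2 * (N + 1))) (Fin (2 * (N + 1))) ℝ :=
  Matrix.of fun i j =>
    let r := i.val + 1
    let s := j.val + 1
    if r = s ∧ r % 2 = 1 then L2a n p ((r + 1) / 2)
    else if s = r + 1 ∧ r % 2 = 1 then L2b n p α N (s / 2)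
    else if r = s + 1 ∧ s % 2 = 1 then L2b n p α N (r / 2)
    else if s = r + 2 ∧ r % 2 = 1 then L2e n p α N ((r + 1) / 2)
    else if r = s + 2 ∧ s % 2 = 1 then L2e n p α N ((s + 1) / 2)
    else 0


open Polynomial

section gegen

lemma poch_succ (a : ℝ) (k : ℕ) : poch a (k + 1) = poch a k * (a + k) := by
  simp [poch, Finset.prod_range_succ]

lemma poch_succ' (a : ℝ) (k : ℕ) : poch a (k + 1) = a * poch (a + 1) k := by
  simp only [poch, Finset.prod_range_succ']
  push_cast
  rw [mul_comm]
  congr 1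
  · ring
  · apply Finset.prod_congr rfl
    intros; ring

lemma poch_zero (a : ℝ) : poch a 0 = 1 := by simp [poch]

lemma poch_pos (a : ℝ) (ha : 0 < a) (k : ℕ) : 0 < poch a k := by
  apply Finset.prod_pos
  intros; positivity

lemma poch_neg_zero (w k : ℕ) (h : w < k) : poch (-(w : ℝ)) k = 0 := by
  apply Finset.prod_eq_zero (Finset.mem_range.mpr h)
  ring

/-- Coefficients of the Gegenbauer polynomial in `t = (1-x)/2`. -/
noncomputable def gc (l : ℝ) (w k : ℕ) : ℝ :=
  poch (2 * l) w / (w.factorial : ℝ) * ((poch (-(w : ℝ)) k * poch ((w : ℝ) + 2 * l) k) /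
            (poch (l + 1 / 2) k * (k.factorial : ℝ)))

lemma gc_zero (l : ℝ) (w k : ℕ) (h : w < k) : gc l w k = 0 := by
  simp [gc, poch_neg_zero w k h]

noncomputable def gV (l : ℝ) (w : ℕ) : ℝ[X] :=
  ∑ k ∈ Finset.range (w + 1), C (gc l w k) * X ^ k

lemma gV_coeff (l : ℝ) (w k : ℕ) : (gV l w).coeff k = gc l w k := by
  simp only [gV, finsetSum_coeff, coeff_C_mul_X_pow]
  rw [Finset.sum_ite_eq]
  split_ifs with h
  · rfl
  · rw [gc_zero]; simpa using h

lemma geg_eq (l : ℝ) (w : ℕ) (x : ℝ) : geg l (w : ℤ) x = (gV l w).eval ((1 - x) / 2) := by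
  have : ¬ ((w : ℤ) < 0) := by omega
  simp only [geg, this, if_false, gV, eval_finsetSum, Finset.mul_sum, Int.toNat_natCast]
  apply Finset.sum_congr rfl
  intro k _
  simp [gc]; ring

lemma gc_raise (l : ℝ) (hl : 0 < l) (w k : ℕ) :
    ((w : ℝ) + 1) * gc l (w + 1) (k + 1) =
      (2 * l + w + 2 * k + 2) * gc l w (k + 1) - 2 * (2 * l + w + k) * gc l w k := by
  have h1 : poch (l + 1 / 2) k ≠ 0 := (poch_pos _ (by linarith) _).ne'
  have h2 : l + 1 / 2 + k ≠ 0 := by positivity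
  have h3 : (w : ℝ) + 2 * l ≠ 0 := by positivity
  have e1 : poch (-((w : ℝ) + 1)) (k + 1) = -(w + 1) * poch (-(w : ℝ)) k := by
    rw [poch_succ', show -((w : ℝ) + 1) + 1 = -w by ring]
  have e2 : poch ((w : ℝ) + 1 + 2 * l) (k + 1) * (w + 2 * l) =
      poch (w + 2 * l) k * (w + 2 * l + k) * (w + 2 * l + k + 1) := by
    have a := poch_succ ((w : ℝ) + 2 * l) (k + 1)
    rw [poch_succ'] at a
    rw [show (w : ℝ) + 2 * l + 1 = w + 1 + 2 * l by ring, poch_succ ((w : ℝ) + 2 * l) k] at a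
    push_cast at a
    linear_combination a
  have e2' : poch ((w : ℝ) + 1 + 2 * l) (k + 1) =
      poch (w + 2 * l) k * (w + 2 * l + k) * (w + 2 * l + k + 1) / (w + 2 * l) := by
    rw [← e2]; field_simp
  have h4 : l * 2 + 1 + 2 * (k : ℝ) ≠ 0 := by positivity
  simp only [gc, Nat.factorial_succ, poch_succ (2 * l), poch_succ (l + 1 / 2)]
  push_cast
  rw [e1, e2', poch_succ, poch_succ]
  field_simp
  ring

lemma gc_deriv (l : ℝ) (hl : 0 < l) (w k : ℕ) :
    ((k : ℝ) + 1) * gc l (w + 1) (k + 1) = - 4 * l * gc (l + 1) w k := by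
  have h1 : poch (l + 1 + 1 / 2) k ≠ 0 := (poch_pos _ (by linarith) _).ne'
  have h2 : l + 1 / 2  ≠ 0 := by positivity
  have h3 : (2 * l + 1) ≠ 0 := by positivity
  have h4 : (2 * l + 1 + w) ≠ 0 := by positivity
  have e1 : poch (-((w : ℝ) + 1)) (k + 1) = -(w + 1) * poch (-(w : ℝ)) k := by
    rw [poch_succ', show -((w : ℝ) + 1) + 1 = -w by ring]
  have e3 : poch (2 * l) (w + 1) * (2 * l + 1 + w) = 2 * l * (2 * l + 1) * poch (2 * (l + 1)) w := by
    have a := poch_succ (2 * l) (w + 1)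
    rw [poch_succ', poch_succ', show 2 * l + 1 + 1 = 2 * (l + 1) by ring] at a
    push_cast at a
    linear_combination - a
  have e3' : poch (2 * l) (w + 1) = 2 * l * (2 * l + 1) * poch (2 * (l + 1)) w / (2 * l + 1 + w) := by
    rw [← e3]; field_simp
  simp only [gc, Nat.factorial_succ]
  push_cast
  rw [e1, e3', poch_succ' (l + 1 / 2), poch_succ' ((w : ℝ) + 1 + 2 * l),
    show l + 1 / 2 + 1 = l + 1 + 1 / 2 by ring,
    show (w : ℝ) + 1 + 2 * l + 1 = w + 2 * (l + 1) by ring]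
  field_simp
  ring

lemma gV_raise (l : ℝ) (hl : 0 < l) (w : ℕ) :
    C ((w : ℝ) + 1) * gV l (w + 1) = C (2 * l + w) * (1 - 2 * X) * gV l w
      + 2 * X * (1 - X) * derivative (gV l w) := by
  have : C (2 * l + w) * (1 - 2 * X) * gV l w + 2 * X * (1 - X) * derivative (gV l w)
    = C (2 * l + w) * gV l w - C (2 * (2 * l + w)) * (X * gV l w) + C 2 * (X * derivative (gV l w))
      - C 2 * (X * (X * derivative (gV l w))) := by
    rw [C_mul, show (C (2:ℝ) : ℝ[X]) = 2 from rfl]; ring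
  rw [this]
  ext k
  rcases k with _ | _ | k
  · simp [gV_coeff, mul_coeff_zero]
    simp [gc, poch_succ, Nat.factorial_succ, poch_zero]
    field_simp
  · simp only [coeff_add, coeff_sub, gV_coeff, coeff_X_mul, coeff_derivative, coeff_C_mul, coeff_X_mul_zero]
    push_cast
    have := gc_raise l hl w 0
    simp at this
    linear_combination this
  · simp only [coeff_add, coeff_sub, gV_coeff, coeff_X_mul, coeff_derivative, coeff_C_mul]
    push_cast
    have := gc_raise l hl w (k + 1)
    push_cast at this
    linear_combination this

lemma gV_deriv (l : ℝ) (hl : 0 < l) (w : ℕ) :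
    derivative (gV l (w + 1)) = C (-4 * l) * gV (l + 1) w := by
  ext k
  rw [coeff_derivative, coeff_C_mul, gV_coeff, gV_coeff, ← gc_deriv l hl w k]
  ring

end gegen

/-- The scalar polynomials `u_w = C_w^{(n+1)/2}/(n+1)`. -/
noncomputable def gU (n : ℕ) (w : ℕ) : ℝ[X] :=
  C (1 / ((n : ℝ) + 1)) * (gV (((n : ℝ) + 1) / 2) w).comp (C (1 / 2) * (1 - X))

lemma gU_eval (n w : ℕ) (x : ℝ) :
    1 / ((n : ℝ) + 1) * geg (((n : ℝ) + 1) / 2) (w : ℤ) x = (gU n w).eval x := by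
  rw [geg_eq]
  simp only [gU, eval_mul, eval_C, eval_comp, eval_sub, eval_one, eval_X]
  congr 2; ring

lemma gU_zero (n : ℕ) : gU n 0 = C (1 / ((n : ℝ) + 1)) := by
  simp [gU, gV, gc, poch_zero]

lemma gU_deriv_eval (n w : ℕ) (x : ℝ) :
    geg (((n : ℝ) + 3) / 2) ((w : ℤ) - 1) x = (derivative (gU n w)).eval x := by
  rcases w with _ | w
  · simp [gU_zero, geg]
  · rw [show ((w + 1 : ℕ) : ℤ) - 1 = (w : ℤ) by push_cast; ring, geg_eq]
    have hl : (0 : ℝ) < ((n : ℝ) + 1) / 2 := by positivity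
    simp only [gU, derivative_mul, derivative_C, derivative_comp, gV_deriv _ hl]
    simp
    rw [show ((n : ℝ) + 1) / 2 + 1 = ((n : ℝ) + 3) / 2 by ring,
      show 2⁻¹ * (1 - x) = (1 - x) / 2 by ring]
    field_simp
    ring

lemma gU_raise (n w : ℕ) :
    C ((w : ℝ) + 1) * gU n (w + 1) = C ((n : ℝ) + w + 1) * X * gU n w
      - (1 - X ^ 2) * derivative (gU n w) := by
  have hl : (0 : ℝ) < ((n : ℝ) + 1) / 2 := by positivity
  have h := congrArg (fun P : ℝ[X] => P.comp (C (1 / 2) * (1 - X))) (gV_raise _ hl w)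
  simp only [mul_comp, add_comp, sub_comp, C_comp, X_comp, one_comp, ofNat_comp] at h
  simp only [gU, derivative_mul, derivative_C, derivative_comp, derivative_sub, derivative_one,
    derivative_X]
  have h2 : (2 : ℝ[X]) * C (1 / 2) = 1 := by
    rw [show (2 : ℝ[X]) = C 2 from rfl, ← C_mul]; norm_num
  rw [show 2 * (((n : ℝ) + 1) / 2) + w = (n : ℝ) + w + 1 by ring] at h
  set V := (gV (((n : ℝ) + 1) / 2) w).comp (C (1 / 2) * (1 - X)) with hV
  set V' := (derivative (gV (((n : ℝ) + 1) / 2) w)).comp (C (1 / 2) * (1 - X)) with hV'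
  set c := (C (1 / ((n : ℝ) + 1)) : ℝ[X])
  set d := (C (1 / 2) : ℝ[X])
  linear_combination c * h + (- c * C ((n : ℝ) + w + 1) * (1 - X) * V + c * V' * (d * (1 - X) * (-(1 - X)))) * h2

/-- The three basic consequences: derivative relation, lowering relation, ODE. -/
lemma gU_dsucc_aux (n w : ℕ)
    (ode : (1 - X ^ 2) * derivative (derivative (gU n w)) = C ((n : ℝ) + 2) * X * derivative (gU n w)
      - C ((w : ℝ) * (w + n + 1)) * gU n w) :
    derivative (gU n (w + 1)) = C ((n : ℝ) + w + 1) * gU n w + X * derivative (gU n w) := by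
  have h := congrArg derivative (gU_raise n w)
  simp only [derivative_mul, derivative_C, derivative_sub, derivative_one, derivative_X,
    derivative_X_pow] at h
  have hw : (C ((w : ℝ) + 1) : ℝ[X]) ≠ 0 := by
    rw [Ne, C_eq_zero]; positivity
  apply mul_left_cancel₀ hw
  simp only [C_add, C_mul, C_1, map_natCast, show (C (2:ℝ) : ℝ[X]) = 2 from rfl] at h ode ⊢
  simp at h
  linear_combination h - ode

lemma gU_ode (n w : ℕ) :
    (1 - X ^ 2) * derivative (derivative (gU n w)) = C ((n : ℝ) + 2) * X * derivative (gU n w)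
      - C ((w : ℝ) * (w + n + 1)) * gU n w := by
  induction w with
  | zero => simp [gU_zero]
  | succ w ih =>
    have h1 := gU_dsucc_aux n w ih
    have h2 := gU_raise n w
    have low : (1 - X ^ 2) * derivative (gU n (w + 1)) + C ((w : ℝ) + 1) * X * gU n (w + 1)
        = C ((n : ℝ) + w + 1) * gU n w := by
      linear_combination (1 - X ^ 2) * h1 + X * h2
    have h3 : X * derivative (gU n (w + 1)) - C ((w : ℝ) + 1) * gU n (w + 1)
        = derivative (gU n w) := by
      linear_combination X * h1 - h2
    have h := congrArg derivative low
    simp only [derivative_mul, derivative_C, derivative_sub, derivative_add, derivative_one, derivative_X,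
      derivative_X_pow] at h
    push_cast at h ⊢
    simp only [C_add, C_mul, C_1, map_natCast, show (C (2:ℝ) : ℝ[X]) = 2 from rfl] at *
    simp at h
    linear_combination h - ((n : ℝ[X]) + (w : ℝ[X]) + 1) * h3

lemma gU_dsucc (n w : ℕ) :
    derivative (gU n (w + 1)) = C ((n : ℝ) + w + 1) * gU n w + X * derivative (gU n w) :=
  gU_dsucc_aux n w (gU_ode n w)

lemma gU_deriv2_eval (n w : ℕ) (x : ℝ) :
    geg (((n : ℝ) + 3) / 2) ((w : ℤ) - 2) x =
      x * (derivative (gU n w)).eval x - w * (gU n w).eval x := by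
  rcases w with _ | w
  · simp [gU_zero, geg]
  · have h1 := congrArg (eval x) (gU_dsucc n w)
    have h2 := congrArg (eval x) (gU_raise n w)
    rw [show ((w + 1 : ℕ) : ℤ) - 2 = (w : ℤ) - 1 by push_cast; ring, gU_deriv_eval]
    simp at h1 h2
    push_cast
    linear_combination - x * h1 + h2

section norms

/-- The squared scalar normalization. -/
noncomputable def sq0 (n : ℕ) (w : ℕ) : ℝ :=
  ((w.factorial : ℝ) * ((n : ℝ) + 1) * ((n : ℝ) + 2 * w + 1) *
        Real.Gamma ((n : ℝ) / 2 + 3 / 2)) /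
      (Real.sqrt Real.pi * 2 ^ (w / 2) * Real.Gamma ((n : ℝ) / 2 + 1 + (w / 2 : ℕ)) *
        ∏ k ∈ Finset.range ((w + 1) / 2), ((n : ℝ) + 2 * k + 1))

lemma sq0_pos (n w : ℕ) : 0 < sq0 n w := by
  unfold sq0
  have h1 : 0 < Real.Gamma ((n : ℝ) / 2 + 3 / 2) := Real.Gamma_pos_of_pos (by positivity)
  have h2 : 0 < Real.Gamma ((n : ℝ) / 2 + 1 + (w / 2 : ℕ)) := Real.Gamma_pos_of_pos (by positivity)
  have h3 : 0 < ∏ k ∈ Finset.range ((w + 1) / 2), ((n : ℝ) + 2 * k + 1) :=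
    Finset.prod_pos fun _ _ => by positivity
  have := Real.pi_pos
  positivity

lemma sq0_succ (n w : ℕ) :
    sq0 n (w + 1) = sq0 n w * (((w : ℝ) + 1) * (n + 2 * w + 3) / ((n + 2 * w + 1) * (n + w + 1))) := by
  have h1 : 0 < Real.Gamma ((n : ℝ) / 2 + 3 / 2) := Real.Gamma_pos_of_pos (by positivity)
  have hpi : 0 < Real.sqrt Real.pi := Real.sqrt_pos.mpr Real.pi_pos
  rcases Nat.even_or_odd' w with ⟨m, rfl | rfl⟩
  · have e1 : (2 * m) / 2 = m := by omega
    have e2 : (2 * m + 1) / 2 = m := by omega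
    have e3 : (2 * m + 1 + 1) / 2 = m + 1 := by omega
    have h2 : 0 < Real.Gamma ((n : ℝ) / 2 + 1 + m) := Real.Gamma_pos_of_pos (by positivity)
    have h3 : 0 < ∏ k ∈ Finset.range m, ((n : ℝ) + 2 * k + 1) :=
      Finset.prod_pos fun _ _ => by positivity
    simp only [sq0, e1, e2, e3, Finset.prod_range_succ, Nat.factorial_succ]
    push_cast
    have h4 : (0 : ℝ) < n + 2 * (2 * m) + 1 := by positivity
    have h5 : (0 : ℝ) < n + 2 * m + 1 := by positivity
    field_simp
    ring
  · have e1 : (2 * m + 1) / 2 = m := by omega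
    have e2 : (2 * m + 1 + 1) / 2 = m + 1 := by omega
    have e3 : (2 * m + 1 + 1 + 1) / 2 = m + 1 := by omega
    have h2 : 0 < Real.Gamma ((n : ℝ) / 2 + 1 + m) := Real.Gamma_pos_of_pos (by positivity)
    have h3 : 0 < ∏ k ∈ Finset.range (m + 1), ((n : ℝ) + 2 * k + 1) :=
      Finset.prod_pos fun _ _ => by positivity
    simp only [sq0, e1, e2, e3, Nat.factorial_succ]
    have hG : Real.Gamma ((n : ℝ) / 2 + 1 + (m + 1 : ℕ)) =
        ((n : ℝ) / 2 + 1 + m) * Real.Gamma ((n : ℝ) / 2 + 1 + m) := by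
      rw [← Real.Gamma_add_one (by positivity)]
      push_cast; ring_nf
    rw [hG]
    push_cast
    have h4 : (0 : ℝ) < n + 2 * (2 * m + 1) + 1 := by positivity
    have h5 : (0 : ℝ) < n + 2 + 2 * m := by positivity
    have h6 : (0 : ℝ) < n + (2 * m + 1) + 1 := by positivity
    generalize Real.Gamma ((n : ℝ) / 2 + 1 + m) = G at *
    generalize Real.Gamma ((n : ℝ) / 2 + 3 / 2) = G' at *
    rw [pow_succ, show (n : ℝ) / 2 + 1 + m = (n + 2 + 2 * m) / 2 by ring]
    field_simp
    ring

noncomputable def rr1 (n : ℕ) (p : ℝ) (w : ℕ) : ℝ :=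
  Real.sqrt (sq0 n w) * Real.sqrt ((p + w) / (p * ((n : ℝ) - p + w + 1))) / (p + w)

noncomputable def rr2 (n : ℕ) (p : ℝ) (w : ℕ) : ℝ :=
  Real.sqrt (sq0 n w) * Real.sqrt (((n : ℝ) - p + w) / (((n : ℝ) - p) * (p + w + 1))) / ((n : ℝ) - p + w)

variable {n : ℕ} {p : ℝ}

lemma rr1_nonneg (hp : 0 < p) (w : ℕ) : 0 ≤ rr1 n p w := by unfold rr1; positivity
lemma rr2_nonneg (hpn : p < n) (w : ℕ) : 0 ≤ rr2 n p w := by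
  have : 0 < (n : ℝ) - p := by linarith
  unfold rr2; positivity

lemma rr1_sq (hp : 0 < p) (hpn : p < n) (w : ℕ) :
    rr1 n p w ^ 2 = sq0 n w / (p * (p + w) * ((n : ℝ) - p + w + 1)) := by
  have : 0 < (n : ℝ) - p := by linarith
  have h := sq0_pos n w
  unfold rr1
  rw [div_pow, mul_pow, Real.sq_sqrt h.le, Real.sq_sqrt (by positivity)]
  field_simp

lemma rr2_sq (hp : 0 < p) (hpn : p < n) (w : ℕ) :
    rr2 n p w ^ 2 = sq0 n w / (((n : ℝ) - p) * ((n : ℝ) - p + w) * (p + w + 1)) := by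
  have : 0 < (n : ℝ) - p := by linarith
  have h := sq0_pos n w
  unfold rr2
  rw [div_pow, mul_pow, Real.sq_sqrt h.le, Real.sq_sqrt (by positivity)]
  field_simp

lemma sqrt_mul_aux {A r r' c : ℝ} (hA : 0 ≤ A) (hr : 0 ≤ r) (hr' : 0 ≤ r') (hc : 0 ≤ c)
    (h : A * r ^ 2 = c ^ 2 * r' ^ 2) : Real.sqrt A * r = c * r' := by
  have h1 : 0 ≤ Real.sqrt A * r := by positivity
  have h2 : 0 ≤ c * r' := by positivity
  rw [← sq_eq_sq₀ h1 h2, mul_pow, mul_pow, Real.sq_sqrt hA, h]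


lemma L2b_rr2 (hp : 0 < p) (hpn : p < n) (α : ℝ) (N i : ℕ) : L2b n p α N (i + 1) * rr2 n p i =
    ((n : ℝ) - p + N + 1) * (p + N + 1) / (α * ((n : ℝ) - p + 1) * ((n : ℝ) - 2 * p)) *
    ((p + i) * ((n : ℝ) - p + i + 1) / (((n : ℝ) - p + i) * (p + i + 1)) * rr1 n p i) := by
  have hq : 0 < (n : ℝ) - p := by linarith
  unfold L2b
  rw [mul_assoc]
  congr 1
  rw [show ((n : ℝ) - p + (i + 1 : ℕ)) * (p + (i + 1 : ℕ) - 1) * ((n : ℝ) - p) /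
      (p * (p + (i + 1 : ℕ)) * ((n : ℝ) - p + (i + 1 : ℕ) - 1)) =
      ((n : ℝ) - p + i + 1) * (p + i) * ((n : ℝ) - p) /
      (p * (p + i + 1) * ((n : ℝ) - p + i)) by push_cast; congr 1 <;> ring]
  apply sqrt_mul_aux (by positivity) (rr2_nonneg hpn i) (rr1_nonneg hp i) (by positivity)
  rw [rr1_sq hp hpn, rr2_sq hp hpn]
  field_simp

lemma L2b_rr1 (hp : 0 < p) (hpn : p < n) (α : ℝ) (N i : ℕ) : L2b n p α N (i + 1) * rr1 n p i =
    ((n : ℝ) - p + N + 1) * (p + N + 1) / (α * ((n : ℝ) - p + 1) * ((n : ℝ) - 2 * p)) *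
    (((n : ℝ) - p) / p * rr2 n p i) := by
  have hq : 0 < (n : ℝ) - p := by linarith
  unfold L2b
  rw [mul_assoc]
  congr 1
  rw [show ((n : ℝ) - p + (i + 1 : ℕ)) * (p + (i + 1 : ℕ) - 1) * ((n : ℝ) - p) /
      (p * (p + (i + 1 : ℕ)) * ((n : ℝ) - p + (i + 1 : ℕ) - 1)) =
      ((n : ℝ) - p + i + 1) * (p + i) * ((n : ℝ) - p) /
      (p * (p + i + 1) * ((n : ℝ) - p + i)) by push_cast; congr 1 <;> ring]
  apply sqrt_mul_aux (by positivity) (rr1_nonneg hp i) (rr2_nonneg hpn i) (by positivity)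
  rw [rr1_sq hp hpn, rr2_sq hp hpn]
  field_simp

lemma L2e_up (hp : 0 < p) (hpn : p < n) (α : ℝ) (N i : ℕ) : L2e n p α N (i + 1) * rr1 n p (i + 1) =
    ((N : ℝ) - i) * ((N : ℝ) + n + i + 2) / (α * p * ((n : ℝ) - p + 1)) *
    (((i : ℝ) + 1) * (p + i) / ((n + 2 * i + 1) * (p + i + 1)) * rr1 n p i) := by
  have hq : 0 < (n : ℝ) - p := by linarith
  unfold L2e
  rw [mul_assoc]
  congr 1
  · push_cast; congr 1; ring
  rw [show ((i + 1 : ℕ) : ℝ) * (p + (i + 1 : ℕ) - 1) * ((n : ℝ) - p + 1 + (i + 1 : ℕ)) * ((n : ℝ) + (i + 1 : ℕ)) /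
      (((n : ℝ) + 2 * (i + 1 : ℕ) - 1) * ((n : ℝ) + 2 * (i + 1 : ℕ) + 1) * (p + (i + 1 : ℕ)) * ((n : ℝ) - p + (i + 1 : ℕ)))
      = ((i : ℝ) + 1) * (p + i) * ((n : ℝ) - p + i + 2) * ((n : ℝ) + i + 1) /
      (((n : ℝ) + 2 * i + 1) * ((n : ℝ) + 2 * i + 3) * (p + i + 1) * ((n : ℝ) - p + i + 1)) by
      push_cast; congr 1 <;> ring]
  apply sqrt_mul_aux (by positivity) (rr1_nonneg hp _) (rr1_nonneg hp i) (by positivity)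
  rw [rr1_sq hp hpn, rr1_sq hp hpn, sq0_succ]
  push_cast
  have h1 : 0 < (n : ℝ) - p + (i + 1) + 1 := by positivity
  have h2 : 0 < (n : ℝ) - p + i + 2 := by positivity
  have h3 : 0 < (n : ℝ) - p + i + 1 := by positivity
  have h4 : 0 < p + i + 1 := by positivity
  field_simp
  ring

lemma L2e_down (hp : 0 < p) (hpn : p < n) (α : ℝ) (N i : ℕ) : L2e n p α N (i + 1) * rr1 n p i =
    ((N : ℝ) - i) * ((N : ℝ) + n + i + 2) / (α * p * ((n : ℝ) - p + 1)) *
    (((n : ℝ) - p + i + 2) * (n + i + 1) / ((n + 2 * i + 3) * ((n : ℝ) - p + i + 1)) * rr1 n p (i + 1)) := by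
  have hq : 0 < (n : ℝ) - p := by linarith
  unfold L2e
  rw [mul_assoc]
  congr 1
  · push_cast; congr 1; ring
  rw [show ((i + 1 : ℕ) : ℝ) * (p + (i + 1 : ℕ) - 1) * ((n : ℝ) - p + 1 + (i + 1 : ℕ)) * ((n : ℝ) + (i + 1 : ℕ)) /
      (((n : ℝ) + 2 * (i + 1 : ℕ) - 1) * ((n : ℝ) + 2 * (i + 1 : ℕ) + 1) * (p + (i + 1 : ℕ)) * ((n : ℝ) - p + (i + 1 : ℕ)))
      = ((i : ℝ) + 1) * (p + i) * ((n : ℝ) - p + i + 2) * ((n : ℝ) + i + 1) /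
      (((n : ℝ) + 2 * i + 1) * ((n : ℝ) + 2 * i + 3) * (p + i + 1) * ((n : ℝ) - p + i + 1)) by
      push_cast; congr 1 <;> ring]
  apply sqrt_mul_aux (by positivity) (rr1_nonneg hp _) (rr1_nonneg hp _) (by positivity)
  rw [rr1_sq hp hpn, rr1_sq hp hpn, sq0_succ]
  push_cast
  have h1 : 0 < (n : ℝ) - p + (i + 1) + 1 := by positivity
  have h2 : 0 < (n : ℝ) - p + i + 2 := by positivity
  have h3 : 0 < (n : ℝ) - p + i + 1 := by positivity
  have h4 : 0 < p + i + 1 := by positivity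
  field_simp
  ring

end norms

lemma Smat_eq (n : ℕ) (p : ℝ) (w : ℕ) : Smat n p w = Real.sqrt (sq0 n w) •
    Matrix.diagonal ![Real.sqrt ((p + w) / (p * ((n : ℝ) - p + w + 1))),
      Real.sqrt (((n : ℝ) - p + w) / (((n : ℝ) - p) * (p + w + 1)))] := rfl

lemma Q00 (n : ℕ) (p : ℝ) (hp : 0 < p) (w : ℕ) (x : ℝ) : Qmat n p w x 0 0 =
    rr1 n p w * (p * (gU n w).eval x + x * (derivative (gU n w)).eval x) := by
  have h : p + w ≠ 0 := by positivity
  simp only [Qmat, Smat_eq, Pmat, gU_eval, gU_deriv_eval, gU_deriv2_eval, rr1]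
  simp [Matrix.mul_apply]
  field_simp
  ring

lemma Q01 (n : ℕ) (p : ℝ) (w : ℕ) (x : ℝ) : Qmat n p w x 0 1 =
    rr1 n p w * ((derivative (gU n w)).eval x) := by
  simp only [Qmat, Smat_eq, Pmat, gU_eval, gU_deriv_eval, gU_deriv2_eval, rr1]
  simp [Matrix.mul_apply]
  ring

lemma Q10 (n : ℕ) (p : ℝ) (w : ℕ) (x : ℝ) : Qmat n p w x 1 0 =
    rr2 n p w * ((derivative (gU n w)).eval x) := by
  simp only [Qmat, Smat_eq, Pmat, gU_eval, gU_deriv_eval, gU_deriv2_eval, rr2]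
  simp [Matrix.mul_apply]
  ring

lemma Q11 (n : ℕ) (p : ℝ) (hpn : p < n) (w : ℕ) (x : ℝ) : Qmat n p w x 1 1 =
    rr2 n p w * (((n : ℝ) - p) * (gU n w).eval x + x * (derivative (gU n w)).eval x) := by
  have hq : 0 < (n : ℝ) - p := by linarith
  have h : (n : ℝ) - p + w ≠ 0 := by positivity
  simp only [Qmat, Smat_eq, Pmat, gU_eval, gU_deriv_eval, gU_deriv2_eval, rr2]
  simp [Matrix.mul_apply]
  field_simp
  ring

/-- `L2` on natural-number indices. -/
noncomputable def L2n (n : ℕ) (p α : ℝ) (N : ℕ) (i j : ℕ) : ℝ :=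
    if i + 1 = j + 1 ∧ (i + 1) % 2 = 1 then L2a n p ((i + 1 + 1) / 2)
    else if j + 1 = i + 1 + 1 ∧ (i + 1) % 2 = 1 then L2b n p α N ((j + 1) / 2)
    else if i + 1 = j + 1 + 1 ∧ (j + 1) % 2 = 1 then L2b n p α N ((i + 1) / 2)
    else if j + 1 = i + 1 + 2 ∧ (i + 1) % 2 = 1 then L2e n p α N ((i + 1 + 1) / 2)
    else if i + 1 = j + 1 + 2 ∧ (j + 1) % 2 = 1 then L2e n p α N ((j + 1 + 1) / 2)
    else 0

lemma L2_eq (n : ℕ) (p α : ℝ) (N : ℕ) (i j : Fin (2 * (N + 1))) :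
    L2 n p α N i j = L2n n p α N i j := rfl

lemma L2_symm (n : ℕ) (p α : ℝ) (N : ℕ) (i j : Fin (2 * (N + 1))) :
    L2 n p α N i j = L2 n p α N j i := by
  simp only [L2_eq, L2n]
  split_ifs <;> first | rfl | omega | (congr 1; omega)

lemma L2n_sum_odd (n : ℕ) (p α : ℝ) (N i : ℕ) (hi : i ≤ N) (f : ℕ → ℝ) :
    ∑ s : Fin (2 * (N + 1)), L2n n p α N (2 * i + 1) s * f s = L2b n p α N (i + 1) * f (2 * i) := by
  rw [Fin.sum_univ_eq_sum_range (fun s => L2n n p α N (2 * i + 1) s * f s)]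
  rw [Finset.sum_eq_single (2 * i)]
  · congr 1
    have h1 : ¬ (2 * i + 1 + 1 = 2 * i + 1 ∧ (2 * i + 1 + 1) % 2 = 1) := by omega
    have h2 : ¬ (2 * i + 1 = 2 * i + 1 + 1 + 1 ∧ (2 * i + 1 + 1) % 2 = 1) := by omega
    have h3 : (2 * i + 1 + 1 = 2 * i + 1 + 1 ∧ (2 * i + 1) % 2 = 1) := by omega
    rw [L2n, if_neg h1, if_neg h2, if_pos h3]
    congr 1; omega
  · intro s _ hs
    have : L2n n p α N (2 * i + 1) s = 0 := by
      unfold L2n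
      split_ifs <;> first | rfl | omega
    rw [this, zero_mul]
  · intro h; simp at h; omega

lemma L2e_top (n : ℕ) (p α : ℝ) (N : ℕ) : L2e n p α N (N + 1) = 0 := by
  simp [L2e]

lemma L2n_sum_even (n : ℕ) (p α : ℝ) (N i : ℕ) (hi : i ≤ N) (f : ℕ → ℝ) :
    ∑ s : Fin (2 * (N + 1)), L2n n p α N (2 * i) s * f s =
      L2a n p (i + 1) * f (2 * i) + L2b n p α N (i + 1) * f (2 * i + 1)
      + L2e n p α N (i + 1) * f (2 * (i + 1)) +
      (if i = 0 then 0 else L2e n p α N i * f (2 * (i - 1))) := by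
  rw [Fin.sum_univ_eq_sum_range (fun s => L2n n p α N (2 * i) s * f s)]
  have key : ∀ s, L2n n p α N (2 * i) s * f s =
      (if s = 2 * i then L2a n p (i + 1) * f (2 * i) else 0)
      + (if s = 2 * i + 1 then L2b n p α N (i + 1) * f (2 * i + 1) else 0)
      + (if s = 2 * (i + 1) then L2e n p α N (i + 1) * f (2 * (i + 1)) else 0)
      + (if s = 2 * (i - 1) then (if i = 0 then 0 else L2e n p α N i * f (2 * (i - 1))) else 0) := by
    intro s
    by_cases c1 : s = 2 * i
    · subst c1
      have h1 : (2 * i + 1 = 2 * i + 1 ∧ (2 * i + 1) % 2 = 1) := by omega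
      rw [L2n, if_pos h1, if_pos rfl, if_neg (by omega), if_neg (by omega)]
      rw [show (2 * i + 1 + 1) / 2 = i + 1 by omega]
      by_cases hi0 : i = 0
      · simp [hi0]
      · rw [if_neg (by omega)]; ring
    by_cases c2 : s = 2 * i + 1
    · subst c2
      rw [L2n, if_neg (by omega), if_pos (by omega), if_neg (by omega), if_pos rfl, if_neg (by omega),
        if_neg (by omega)]
      rw [show (2 * i + 1 + 1) / 2 = i + 1 by omega]; ring
    by_cases c3 : s = 2 * (i + 1)
    · subst c3
      rw [L2n, if_neg (by omega), if_neg (by omega), if_neg (by omega), if_pos (by omega),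
        if_neg (by omega), if_neg (by omega), if_pos rfl, if_neg (by omega)]
      rw [show (2 * i + 1 + 1) / 2 = i + 1 by omega]; ring
    by_cases c4 : s = 2 * (i - 1)
    · by_cases hi0 : i = 0
      · omega
      subst c4
      rw [L2n, if_neg (by omega), if_neg (by omega), if_neg (by omega), if_neg (by omega),
        if_pos (by omega), if_neg (by omega), if_neg (by omega), if_neg (by omega), if_pos rfl,
        if_neg hi0]
      rw [show (2 * (i - 1) + 1 + 1) / 2 = i by omega]; ring
    · rw [if_neg c1, if_neg c2, if_neg c3, if_neg c4]
      have : L2n n p α N (2 * i) s = 0 := by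
        unfold L2n
        split_ifs <;> first | rfl | omega
      rw [this]; ring
  simp only [key, Finset.sum_add_distrib, Finset.sum_ite_eq', Finset.mem_range]
  rw [if_pos (show 2 * i < 2 * (N + 1) by omega), if_pos (show 2 * i + 1 < 2 * (N + 1) by omega),
    if_pos (show 2 * (i - 1) < 2 * (N + 1) by omega)]
  by_cases h : i = N
  · subst h; rw [L2e_top]; simp
  · rw [if_pos (by omega)]

section integrals

noncomputable def rho (n : ℕ) (x : ℝ) : ℝ := (1 - x ^ 2) ^ ((n : ℝ) / 2 - 1)

lemma rho_int (n : ℕ) (hn : 1 ≤ n) (α : ℝ) (hα : α ∈ Set.Ioo (-1 : ℝ) 1) :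
    IntervalIntegrable (rho n) MeasureTheory.volume (-1) α := by
  have hn' : (1 : ℝ) ≤ n := by exact_mod_cast hn
  have h1 : IntervalIntegrable (fun x : ℝ => x ^ ((n : ℝ) / 2 - 1)) MeasureTheory.volume 0 (α + 1) :=
    intervalIntegral.intervalIntegrable_rpow' (by linarith)
  have h2 := h1.comp_add_right 1
  simp only [zero_sub, add_sub_cancel_right] at h2
  have h3 : ContinuousOn (fun x : ℝ => (1 - x) ^ ((n : ℝ) / 2 - 1)) (Set.uIcc (-1) α) := by
    apply ContinuousOn.rpow_const (by fun_prop)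
    intro x hx
    rw [Set.uIcc_of_le hα.1.le] at hx
    left; linarith [hx.2, hα.2]
  have h4 := h2.mul_continuousOn h3
  apply h4.congr
  intro x hx
  rw [Set.uIoc_of_le hα.1.le] at hx
  simp only [rho]
  rw [← Real.mul_rpow (by linarith [hx.1]) (by linarith [hx.2, hα.2])]
  congr 1; ring

lemma rho_poly_int (n : ℕ) (hn : 1 ≤ n) (α : ℝ) (hα : α ∈ Set.Ioo (-1 : ℝ) 1) (P : ℝ[X]) :
    IntervalIntegrable (fun x => rho n x * P.eval x) MeasureTheory.volume (-1) α :=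
  (rho_int n hn α hα).mul_continuousOn P.continuous.continuousOn

/-- Integration against the scalar weight. -/
noncomputable def Ilin (n : ℕ) (hn : 1 ≤ n) (α : ℝ) (hα : α ∈ Set.Ioo (-1 : ℝ) 1) : ℝ[X] →ₗ[ℝ] ℝ where
  toFun P := ∫ x in (-1 : ℝ)..α, rho n x * P.eval x
  map_add' P Q := by
    rw [← intervalIntegral.integral_add (rho_poly_int n hn α hα P) (rho_poly_int n hn α hα Q)]
    congr 1; ext x; simp; ring
  map_smul' c P := by
    rw [RingHom.id_apply, smul_eq_mul, ← intervalIntegral.integral_const_mul]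
    congr 1; ext x; simp; ring

lemma Ilin_exact (n : ℕ) (hn : 1 ≤ n) (α : ℝ) (hα : α ∈ Set.Ioo (-1 : ℝ) 1) (P : ℝ[X])
    (hP : P.eval α = 0) :
    Ilin n hn α hα ((1 - X ^ 2) * derivative P - C (n : ℝ) * X * P) = 0 := by
  have hn' : (1 : ℝ) ≤ n := by exact_mod_cast hn
  change ∫ x in (-1 : ℝ)..α, rho n x * eval x _ = 0
  have key := intervalIntegral.integral_eq_sub_of_hasDerivAt_of_le (a := -1) (b := α)
    (f := fun x => (1 - x ^ 2) ^ ((n : ℝ) / 2) * P.eval x)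
    (f' := fun x => rho n x * ((1 - X ^ 2) * derivative P - C (n : ℝ) * X * P).eval x) hα.1.le ?_ ?_
    (rho_poly_int n hn α hα _)
  · rw [key, hP]
    have : (1 - (-1 : ℝ) ^ 2) ^ ((n : ℝ) / 2) = 0 := by
      norm_num
      rw [Real.zero_rpow (by positivity)]
    rw [this]; ring
  · apply ContinuousOn.mul _ P.continuous.continuousOn
    apply ContinuousOn.rpow_const (by fun_prop)
    intro x _
    right; positivity
  · intro x hx
    have hpos : 0 < 1 - x ^ 2 := by nlinarith [hx.1, hx.2, hα.2]
    have d1 : HasDerivAt (fun x : ℝ => 1 - x ^ 2) (-(2 * x)) x := by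
      simpa using (hasDerivAt_pow 2 x).const_sub 1
    have d2 := (d1.rpow_const (p := (n : ℝ) / 2) (Or.inl hpos.ne')).mul (P.hasDerivAt x)
    refine d2.congr_deriv ?_
    have e : (1 - x ^ 2) ^ ((n : ℝ) / 2) = rho n x * (1 - x ^ 2) := by
      rw [rho, ← Real.rpow_add_one hpos.ne']; congr 1; ring
    rw [e, ← rho]
    simp
    ring

end integrals

/-- polynomial rows -/
noncomputable def qp0 (n : ℕ) (p : ℝ) (r : ℕ) : ℝ[X] :=
  if r % 2 = 0 then C (rr1 n p (r / 2)) * (C p * gU n (r / 2) + X * derivative (gU n (r / 2)))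
  else C (rr2 n p (r / 2)) * derivative (gU n (r / 2))

noncomputable def qp1 (n : ℕ) (p : ℝ) (r : ℕ) : ℝ[X] :=
  if r % 2 = 0 then C (rr1 n p (r / 2)) * derivative (gU n (r / 2))
  else C (rr2 n p (r / 2)) * (C ((n : ℝ) - p) * gU n (r / 2) + X * derivative (gU n (r / 2)))

lemma qp0_even (n : ℕ) (p : ℝ) (i : ℕ) :
    qp0 n p (2 * i) = C (rr1 n p i) * (C p * gU n i + X * derivative (gU n i)) := by
  rw [qp0, if_pos (by omega), show 2 * i / 2 = i by omega]

lemma qp1_even (n : ℕ) (p : ℝ) (i : ℕ) :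
    qp1 n p (2 * i) = C (rr1 n p i) * derivative (gU n i) := by
  rw [qp1, if_pos (by omega), show 2 * i / 2 = i by omega]

lemma qp0_odd (n : ℕ) (p : ℝ) (i : ℕ) :
    qp0 n p (2 * i + 1) = C (rr2 n p i) * derivative (gU n i) := by
  rw [qp0, if_neg (by omega), show (2 * i + 1) / 2 = i by omega]

lemma qp1_odd (n : ℕ) (p : ℝ) (i : ℕ) :
    qp1 n p (2 * i + 1) = C (rr2 n p i) * (C ((n : ℝ) - p) * gU n i + X * derivative (gU n i)) := by
  rw [qp1, if_neg (by omega), show (2 * i + 1) / 2 = i by omega]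

lemma Q_qp0 (n : ℕ) (p : ℝ) (hp : 0 < p) (r : ℕ) (x : ℝ) :
    Qmat n p (r / 2) x ⟨r % 2, by omega⟩ 0 = (qp0 n p r).eval x := by
  rcases Nat.mod_two_eq_zero_or_one r with h | h
  · simp only [h, qp0, if_true]
    have := Q00 n p hp (r / 2) x
    simp at this ⊢
    exact this
  · simp only [h, qp0]
    have := Q10 n p (r / 2) x
    simp at this ⊢
    exact this

lemma Q_qp1 (n : ℕ) (p : ℝ) (hpn : p < n) (r : ℕ) (x : ℝ) :
    Qmat n p (r / 2) x ⟨r % 2, by omega⟩ 1 = (qp1 n p r).eval x := by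
  rcases Nat.mod_two_eq_zero_or_one r with h | h
  · simp only [h, qp1, if_true]
    have := Q01 n p (r / 2) x
    simp at this ⊢
    exact this
  · simp only [h, qp1]
    have := Q11 n p hpn (r / 2) x
    simp at this ⊢
    exact this

/-- The bilinear form of the weight (without scalar factor). -/
noncomputable def Bp (n : ℕ) (p : ℝ) (a b c d : ℝ[X]) : ℝ[X] :=
  a * (C p * X ^ 2 + C ((n : ℝ) - p)) * c - C (n : ℝ) * X * (a * d + b * c)
    + b * (C ((n : ℝ) - p) * X ^ 2 + C p) * d

lemma Bp_symm (n : ℕ) (p : ℝ) (a b c d : ℝ[X]) : Bp n p a b c d = Bp n p c d a b := by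
  unfold Bp; ring

lemma Mfull_eq (n : ℕ) (hn : 1 ≤ n) (p : ℝ) (hp : 0 < p) (hpn : p < n) (N : ℕ) (α : ℝ)
    (hα : α ∈ Set.Ioo (-1 : ℝ) 1) (r c : Fin (2 * (N + 1))) :
    Mfull n p α N r c = Ilin n hn α hα (Bp n p (qp0 n p r) (qp1 n p r) (qp0 n p c) (qp1 n p c)) := by
  change (∫ x in (-1 : ℝ)..α, _) = ∫ x in (-1 : ℝ)..α, _
  congr 1
  ext x
  simp only [Matrix.mul_apply, Fin.sum_univ_two, Matrix.transpose_apply, Q_qp0 n p hp, Q_qp1 n p hpn]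
  simp [Wmat, Bp, rho]
  ring

lemma Bp_sum {ι : Type*} (n : ℕ) (p : ℝ) (c d : ℝ[X]) (S : Finset ι) (f : ι → ℝ) (g h : ι → ℝ[X]) :
    Bp n p (∑ s ∈ S, C (f s) * g s) (∑ s ∈ S, C (f s) * h s) c d
      = ∑ s ∈ S, f s • Bp n p (g s) (h s) c d := by
  classical
  induction S using Finset.induction_on with
  | empty => simp [Bp]
  | insert a S ha ih =>
    rw [Finset.sum_insert ha, Finset.sum_insert ha, Finset.sum_insert ha, ← ih, smul_eq_C_mul]
    unfold Bp
    ring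

lemma sum_M (n : ℕ) (hn : 1 ≤ n) (p : ℝ) (hp : 0 < p) (hpn : p < n) (N : ℕ) (α : ℝ)
    (hα : α ∈ Set.Ioo (-1 : ℝ) 1) (c : Fin (2 * (N + 1))) (f : Fin (2 * (N + 1)) → ℝ) :
    ∑ s, f s * Mfull n p α N s c =
      Ilin n hn α hα (Bp n p (∑ s, C (f s) * qp0 n p s) (∑ s, C (f s) * qp1 n p s)
        (qp0 n p c) (qp1 n p c)) := by
  have : Bp n p (∑ s, C (f s) * qp0 n p s) (∑ s, C (f s) * qp1 n p s) (qp0 n p c) (qp1 n p c)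
      = ∑ s, f s • Bp n p (qp0 n p s) (qp1 n p s) (qp0 n p c) (qp1 n p c) := by
    exact Bp_sum n p _ _ Finset.univ f (fun s => qp0 n p s) (fun s => qp1 n p s)
  rw [this, map_sum]
  apply Finset.sum_congr rfl
  intro s _
  rw [map_smul, smul_eq_mul, Mfull_eq n hn p hp hpn N α hα]

lemma L_even_aux (n : ℕ) (p : ℝ) (hp : 0 < p) (hpn : p < n) (hp2 : (n : ℝ) - 2 * p ≠ 0)
    (N : ℕ) (α : ℝ) (hα0 : α ≠ 0) (i : ℕ) (hi : i ≤ N) (f A : ℕ → ℝ) (B : ℝ)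
    (hA : ∀ j, f (2 * j) = rr1 n p j * A j) (hB : f (2 * i + 1) = rr2 n p i * B) :
    ∑ s : Fin (2 * (N + 1)), L2n n p α N (2 * i) s * f s =
      1 / (α * p * ((n : ℝ) - p + 1)) * rr1 n p i *
      (α * ((p + i) * ((n : ℝ) - p + i + 1)) * A i
        + p * (((n : ℝ) - p + N + 1) * (p + N + 1)) / ((n : ℝ) - 2 * p) *
          ((p + i) * ((n : ℝ) - p + i + 1) / (((n : ℝ) - p + i) * (p + i + 1))) * B
        + ((N : ℝ) - i) * ((N : ℝ) + n + i + 2) * (((i : ℝ) + 1) * (p + i) / ((n + 2 * i + 1) * (p + i + 1))) * A (i + 1)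
        + ((N : ℝ) - i + 1) * ((N : ℝ) + n + i + 1) *
          (((n : ℝ) - p + i + 1) / ((n + 2 * i + 1) * ((n : ℝ) - p + i))) *
          ((n + i) * (if i = 0 then 0 else A (i - 1)))) := by
  have hq : 0 < (n : ℝ) - p := by linarith
  rw [L2n_sum_even n p α N i hi, hA, hA, hB]
  have h1 := L2b_rr2 hp hpn α N i
  have h2 := L2e_up hp hpn α N i
  have h3 : L2a n p (i + 1) = ((n : ℝ) - p + i + 1) * (p + i) / (p * ((n : ℝ) - p + 1)) := by
    unfold L2a; push_cast; congr 1; ring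
  have h4 : (if i = 0 then 0 else L2e n p α N i * f (2 * (i - 1))) =
      1 / (α * p * ((n : ℝ) - p + 1)) * rr1 n p i * (((N : ℝ) - i + 1) * ((N : ℝ) + n + i + 1) *
          (((n : ℝ) - p + i + 1) / ((n + 2 * i + 1) * ((n : ℝ) - p + i))) *
          ((n + i) * (if i = 0 then 0 else A (i - 1)))) := by
    rcases i with _ | j
    · simp
    · rw [if_neg (by omega), if_neg (by omega), hA, ← mul_assoc]
      have := L2e_down hp hpn α N j
      simp only [Nat.add_sub_cancel]
      rw [this]
      push_cast
      rw [show (n : ℝ) + 2 * (j + 1) + 1 = n + 2 * j + 3 by ring,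
        show (n : ℝ) - p + (j + 1) = n - p + j + 1 by ring]
      ring
  rw [h4, ← mul_assoc (L2b n p α N (i + 1)), h1, ← mul_assoc (L2e n p α N (i + 1)), h2, h3]
  have h5 : (n : ℝ) - p + 1 ≠ 0 := by positivity
  have e1 : ((n : ℝ) - p + i + 1) * (p + i) / (p * ((n : ℝ) - p + 1)) =
     1 / (α * p * ((n : ℝ) - p + 1)) * (α * ((p + i) * ((n : ℝ) - p + i + 1))) := by
    field_simp
  have e2 : ((n : ℝ) - p + N + 1) * (p + N + 1) / (α * ((n : ℝ) - p + 1) * ((n : ℝ) - 2 * p)) =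
    1 / (α * p * ((n : ℝ) - p + 1)) * (p * (((n : ℝ) - p + N + 1) * (p + N + 1)) / ((n : ℝ) - 2 * p)) := by
    field_simp
  rw [e1, e2]
  ring

/-- Evaluated identities. -/
lemma gU_up (n i : ℕ) (x : ℝ) : (gU n (i + 1)).eval x =
    ((n + i + 1) * x * (gU n i).eval x - (1 - x ^ 2) * (derivative (gU n i)).eval x) / (i + 1) := by
  have h2 := congrArg (eval x) (gU_raise n i)
  simp at h2
  have : (i : ℝ) + 1 ≠ 0 := by positivity
  field_simp
  linear_combination h2

lemma gU_up' (n i : ℕ) (x : ℝ) : (derivative (gU n (i + 1))).eval x =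
    (n + i + 1) * (gU n i).eval x + x * (derivative (gU n i)).eval x := by
  have h2 := congrArg (eval x) (gU_dsucc n i)
  simpa using h2

lemma gU_down (n i : ℕ) (x : ℝ) : (n + i) * (if i = 0 then 0 else (gU n (i - 1)).eval x) =
    (1 - x ^ 2) * (derivative (gU n i)).eval x + i * x * (gU n i).eval x := by
  rcases i with _ | j
  · simp [gU_zero]
  · have h1 := congrArg (eval x) (gU_dsucc n j)
    have h2 := congrArg (eval x) (gU_raise n j)
    simp at h1 h2 ⊢
    linear_combination - (1 - x ^ 2) * h1 - x * h2

lemma gU_down' (n i : ℕ) (x : ℝ) : (if i = 0 then 0 else (derivative (gU n (i - 1))).eval x) =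
    x * (derivative (gU n i)).eval x - i * (gU n i).eval x := by
  rcases i with _ | j
  · simp [gU_zero]
  · have h1 := congrArg (eval x) (gU_dsucc n j)
    have h2 := congrArg (eval x) (gU_raise n j)
    simp at h1 h2 ⊢
    linear_combination - x * h1 + h2

lemma gU_ode_eval (n i : ℕ) (x : ℝ) : (1 - x ^ 2) * (derivative (derivative (gU n i))).eval x =
    (n + 2) * x * (derivative (gU n i)).eval x - i * (i + n + 1) * (gU n i).eval x := by
  have h2 := congrArg (eval x) (gU_ode n i)
  simpa using h2

lemma rat_even1 (n p N i α x u v : ℝ) (hp2 : n - 2 * p ≠ 0) (h1 : n - p + i ≠ 0)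
    (h2 : p + i + 1 ≠ 0) (h3 : n + 2 * i + 1 ≠ 0) :
    α * ((p + i) * (n - p + i + 1)) * v
        + p * ((n - p + N + 1) * (p + N + 1)) / (n - 2 * p) *
          ((p + i) * (n - p + i + 1) / ((n - p + i) * (p + i + 1))) * ((n - p) * u + x * v)
        + (N - i) * (N + n + i + 2) * ((i + 1) * (p + i) / ((n + 2 * i + 1) * (p + i + 1))) *
          ((n + i + 1) * u + x * v)
        + (N - i + 1) * (N + n + i + 1) *
          ((n - p + i + 1) / ((n + 2 * i + 1) * (n - p + i))) *
          ((n + i) * (x * v - i * u)) =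
      (n - p + N + 1) * (p + N + 1) * ((n - p) / (n - 2 * p) * (p * u + x * v))
        + (p + i) * (n - p + i + 1) * ((α - x) * v - u) := by
  obtain ⟨a, ha⟩ : ∃ a, a = n - p + i := ⟨_, rfl⟩
  obtain ⟨b, hb⟩ : ∃ b, b = p + i + 1 := ⟨_, rfl⟩
  obtain ⟨c, hc⟩ : ∃ c, c = n + 2 * i + 1 := ⟨_, rfl⟩
  obtain ⟨d, hd⟩ : ∃ d, d = n - 2 * p := ⟨_, rfl⟩
  rw [← ha] at h1 ⊢
  rw [← hb] at h2 ⊢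
  rw [← hc] at h3 ⊢
  rw [← hd] at hp2 ⊢
  field_simp
  rw [hd, hc, hb, ha]
  ring

lemma rat_even0 (n p N i α x u v : ℝ) (hp2 : n - 2 * p ≠ 0) (h1 : n - p + i ≠ 0)
    (h2 : p + i + 1 ≠ 0) (h3 : n + 2 * i + 1 ≠ 0) (h4 : i + 1 ≠ 0) :
    α * ((p + i) * (n - p + i + 1)) * (p * u + x * v)
        + p * ((n - p + N + 1) * (p + N + 1)) / (n - 2 * p) *
          ((p + i) * (n - p + i + 1) / ((n - p + i) * (p + i + 1))) * v
        + (N - i) * (N + n + i + 2) * ((i + 1) * (p + i) / ((n + 2 * i + 1) * (p + i + 1))) *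
          (p * (((n + i + 1) * x * u - (1 - x ^ 2) * v) / (i + 1)) + x * ((n + i + 1) * u + x * v))
        + (N - i + 1) * (N + n + i + 1) *
          ((n - p + i + 1) / ((n + 2 * i + 1) * (n - p + i))) *
          (p * ((1 - x ^ 2) * v + i * x * u) + (n + i) * x * (x * v - i * u)) =
      (n - p + N + 1) * (p + N + 1) * (x * (p * u + x * v)
          + p / (n - 2 * p) * v)
        + (p + i) * (n - p + i + 1) * (p * (α - x) * u + x * ((α - x) * v - u)) := by
  obtain ⟨a, ha⟩ : ∃ a, a = n - p + i := ⟨_, rfl⟩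
  obtain ⟨b, hb⟩ : ∃ b, b = p + i + 1 := ⟨_, rfl⟩
  obtain ⟨c, hc⟩ : ∃ c, c = n + 2 * i + 1 := ⟨_, rfl⟩
  obtain ⟨d, hd⟩ : ∃ d, d = n - 2 * p := ⟨_, rfl⟩
  obtain ⟨e, he⟩ : ∃ e, e = i + 1 := ⟨_, rfl⟩
  rw [← ha] at h1 ⊢
  rw [← hb] at h2 ⊢
  rw [← hc] at h3 ⊢
  rw [← hd] at hp2 ⊢
  rw [← he] at h4 ⊢
  field_simp
  rw [hd, hc, hb, ha, he]
  ring

lemma l1_even (n : ℕ) (p : ℝ) (hp : 0 < p) (hpn : p < n) (hp2 : (n : ℝ) - 2 * p ≠ 0)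
    (N : ℕ) (α : ℝ) (hα0 : α ≠ 0) (i : ℕ) (hi : i ≤ N) (x : ℝ) :
    (∑ s : Fin (2 * (N + 1)), C (L2n n p α N (2 * i) s) * qp1 n p s).eval x =
      1 / (α * p * ((n : ℝ) - p + 1)) * rr1 n p i *
      (((n : ℝ) - p + N + 1) * (p + N + 1) * (((n : ℝ) - p) / ((n : ℝ) - 2 * p) *
          (p * (gU n i).eval x + x * (derivative (gU n i)).eval x))
        + (p + i) * ((n : ℝ) - p + i + 1) * ((α - x) * (derivative (gU n i)).eval x - (gU n i).eval x)) := by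
  have hq : 0 < (n : ℝ) - p := by linarith
  simp only [eval_finsetSum, eval_mul, eval_C]
  rw [L_even_aux n p hp hpn hp2 N α hα0 i hi (fun s => (qp1 n p s).eval x)
    (fun j => (derivative (gU n j)).eval x)
    (((n : ℝ) - p) * (gU n i).eval x + x * (derivative (gU n i)).eval x)
    (by intro j; simp [qp1_even]) (by simp [qp1_odd])]
  congr 1
  rw [gU_down', gU_up']
  generalize (gU n i).eval x = u
  generalize (derivative (gU n i)).eval x = v
  have h1 : (n : ℝ) - p + i ≠ 0 := by positivity
  have h2 : p + i + 1 ≠ 0 := by positivity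
  have h3 : (n : ℝ) + 2 * i + 1 ≠ 0 := by positivity
  linear_combination rat_even1 n p N i α x u v hp2 h1 h2 h3

lemma l0_even (n : ℕ) (p : ℝ) (hp : 0 < p) (hpn : p < n) (hp2 : (n : ℝ) - 2 * p ≠ 0)
    (N : ℕ) (α : ℝ) (hα0 : α ≠ 0) (i : ℕ) (hi : i ≤ N) (x : ℝ) :
    (∑ s : Fin (2 * (N + 1)), C (L2n n p α N (2 * i) s) * qp0 n p s).eval x =
      1 / (α * p * ((n : ℝ) - p + 1)) * rr1 n p i *
      (((n : ℝ) - p + N + 1) * (p + N + 1) * (x * (p * (gU n i).eval x + x * (derivative (gU n i)).eval x)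
          + p / ((n : ℝ) - 2 * p) * (derivative (gU n i)).eval x)
        + (p + i) * ((n : ℝ) - p + i + 1) * (p * (α - x) * (gU n i).eval x +
          x * ((α - x) * (derivative (gU n i)).eval x - (gU n i).eval x))) := by
  have hq : 0 < (n : ℝ) - p := by linarith
  simp only [eval_finsetSum, eval_mul, eval_C]
  rw [L_even_aux n p hp hpn hp2 N α hα0 i hi (fun s => (qp0 n p s).eval x)
    (fun j => p * (gU n j).eval x + x * (derivative (gU n j)).eval x)
    ((derivative (gU n i)).eval x)
    (by intro j; simp [qp0_even]) (by simp [qp0_odd])]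
  congr 1
  have hd : (n + i) * (if i = 0 then 0 else
      p * (gU n (i - 1)).eval x + x * (derivative (gU n (i - 1))).eval x) =
      p * ((n + i) * (if i = 0 then 0 else (gU n (i - 1)).eval x))
      + (n + i) * x * (if i = 0 then 0 else (derivative (gU n (i - 1))).eval x) := by
    split_ifs <;> ring
  rw [hd, gU_down, gU_down', gU_up', gU_up]
  generalize (gU n i).eval x = u
  generalize (derivative (gU n i)).eval x = v
  have h1 : (n : ℝ) - p + i ≠ 0 := by positivity
  have h2 : p + i + 1 ≠ 0 := by positivity
  have h3 : (n : ℝ) + 2 * i + 1 ≠ 0 := by positivity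
  have h4 : (i : ℝ) + 1 ≠ 0 := by positivity
  linear_combination rat_even0 n p N i α x u v hp2 h1 h2 h3 h4

lemma l0_odd (n : ℕ) (p : ℝ) (hp : 0 < p) (hpn : p < n) (hp2 : (n : ℝ) - 2 * p ≠ 0)
    (N : ℕ) (α : ℝ) (hα0 : α ≠ 0) (i : ℕ) (hi : i ≤ N) (x : ℝ) :
    (∑ s : Fin (2 * (N + 1)), C (L2n n p α N (2 * i + 1) s) * qp0 n p s).eval x =
      1 / (α * p * ((n : ℝ) - p + 1)) * rr2 n p i *
      (((n : ℝ) - p + N + 1) * (p + N + 1) * (((n : ℝ) - p) / ((n : ℝ) - 2 * p) *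
          (p * (gU n i).eval x + x * (derivative (gU n i)).eval x))) := by
  have hq : 0 < (n : ℝ) - p := by linarith
  simp only [eval_finsetSum, eval_mul, eval_C]
  rw [L2n_sum_odd n p α N i hi (fun s => (qp0 n p s).eval x), qp0_even]
  simp only [eval_mul, eval_add, eval_C, eval_X]
  rw [← mul_assoc, L2b_rr1 hp hpn]
  have h5 : (n : ℝ) - p + 1 ≠ 0 := by positivity
  field_simp

lemma l1_odd (n : ℕ) (p : ℝ) (hp : 0 < p) (hpn : p < n) (hp2 : (n : ℝ) - 2 * p ≠ 0)
    (N : ℕ) (α : ℝ) (hα0 : α ≠ 0) (i : ℕ) (hi : i ≤ N) (x : ℝ) :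
    (∑ s : Fin (2 * (N + 1)), C (L2n n p α N (2 * i + 1) s) * qp1 n p s).eval x =
      1 / (α * p * ((n : ℝ) - p + 1)) * rr2 n p i *
      (((n : ℝ) - p + N + 1) * (p + N + 1) * (((n : ℝ) - p) / ((n : ℝ) - 2 * p) *
          (derivative (gU n i)).eval x)) := by
  have hq : 0 < (n : ℝ) - p := by linarith
  simp only [eval_finsetSum, eval_mul, eval_C]
  rw [L2n_sum_odd n p α N i hi (fun s => (qp1 n p s).eval x), qp1_even]
  simp only [eval_mul, eval_C]
  rw [← mul_assoc, L2b_rr1 hp hpn]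
  have h5 : (n : ℝ) - p + 1 ≠ 0 := by positivity
  field_simp

lemma comm_aux (n : ℕ) (hn : 1 ≤ n) (p : ℝ) (hp : 0 < p) (hpn : p < n)
    (N : ℕ) (α : ℝ) (hα : α ∈ Set.Ioo (-1 : ℝ) 1) (hα0 : α ≠ 0)
    (hp2 : (n : ℝ) - 2 * p ≠ 0) (r c : ℕ) (P : ℝ[X]) (hP : P.eval α = 0)
    (h : ∀ x, (Bp n p (∑ s : Fin (2 * (N + 1)), C (L2n n p α N r s) * qp0 n p s)
      (∑ s : Fin (2 * (N + 1)), C (L2n n p α N r s) * qp1 n p s) (qp0 n p c) (qp1 n p c)).eval x -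
     (Bp n p (∑ s : Fin (2 * (N + 1)), C (L2n n p α N c s) * qp0 n p s)
      (∑ s : Fin (2 * (N + 1)), C (L2n n p α N c s) * qp1 n p s) (qp0 n p r) (qp1 n p r)).eval x =
      ((1 - X ^ 2) * derivative P - C (n : ℝ) * X * P).eval x) :
    Ilin n hn α hα (Bp n p (∑ s : Fin (2 * (N + 1)), C (L2n n p α N r s) * qp0 n p s)
      (∑ s : Fin (2 * (N + 1)), C (L2n n p α N r s) * qp1 n p s) (qp0 n p c) (qp1 n p c)) =
    Ilin n hn α hα (Bp n p (∑ s : Fin (2 * (N + 1)), C (L2n n p α N c s) * qp0 n p s)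
      (∑ s : Fin (2 * (N + 1)), C (L2n n p α N c s) * qp1 n p s) (qp0 n p r) (qp1 n p r)) := by
  rw [← sub_eq_zero, ← map_sub, ← Ilin_exact n hn α hα P hP]
  congr 1
  apply Polynomial.funext
  intro x
  rw [eval_sub, h x]

lemma comm_ee (n : ℕ) (hn : 1 ≤ n) (p : ℝ) (hp : 0 < p) (hpn : p < n)
    (N : ℕ) (α : ℝ) (hα : α ∈ Set.Ioo (-1 : ℝ) 1) (hα0 : α ≠ 0)
    (hp2 : (n : ℝ) - 2 * p ≠ 0) (i j : ℕ) (hi : i ≤ N) (hj : j ≤ N) :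
    Ilin n hn α hα (Bp n p (∑ s : Fin (2 * (N + 1)), C (L2n n p α N (2 * i) s) * qp0 n p s)
      (∑ s : Fin (2 * (N + 1)), C (L2n n p α N (2 * i) s) * qp1 n p s) (qp0 n p (2 * j)) (qp1 n p (2 * j))) =
    Ilin n hn α hα (Bp n p (∑ s : Fin (2 * (N + 1)), C (L2n n p α N (2 * j) s) * qp0 n p s)
      (∑ s : Fin (2 * (N + 1)), C (L2n n p α N (2 * j) s) * qp1 n p s) (qp0 n p (2 * i)) (qp1 n p (2 * i))) := by
  apply comm_aux n hn p hp hpn N α hα hα0 hp2 (2 * i) (2 * j)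
    (C (1 / (α * p * ((n : ℝ) - p + 1)) * rr1 n p i * rr1 n p j * p) * (C α - X) *
      (C ((p + i) * ((n : ℝ) - p + i + 1)) * ((1 - X ^ 2) * gU n i * derivative (gU n j)
          - C p * X * gU n i * gU n j)
        - C ((p + j) * ((n : ℝ) - p + j + 1)) * ((1 - X ^ 2) * gU n j * derivative (gU n i)
          - C p * X * gU n i * gU n j)))
  · simp
  · intro x
    simp only [Bp, eval_add, eval_sub, eval_mul, l0_even n p hp hpn hp2 N α hα0 i hi x,
      l0_even n p hp hpn hp2 N α hα0 j hj x, l1_even n p hp hpn hp2 N α hα0 i hi x,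
      l1_even n p hp hpn hp2 N α hα0 j hj x, qp0_even, qp1_even, derivative_mul, derivative_add,
      derivative_sub, derivative_C, derivative_X, derivative_X_pow, derivative_one, eval_C, eval_X,
      eval_pow, eval_one, eval_zero, Nat.cast_ofNat]
    have o1 := gU_ode_eval n i x
    have o2 := gU_ode_eval n j x
    generalize 1 / (α * p * ((n : ℝ) - p + 1)) = k
    generalize (derivative (derivative (gU n i))).eval x = u2 at *
    generalize (derivative (derivative (gU n j))).eval x = v2 at *
    generalize (derivative (gU n i)).eval x = u1 at *
    generalize (derivative (gU n j)).eval x = v1 at *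
    generalize (gU n i).eval x = u at *
    generalize (gU n j).eval x = v at *
    generalize rr1 n p i = ri
    generalize rr1 n p j = rj
    generalize ((n : ℝ) - p + N + 1) * (p + N + 1) = K
    obtain ⟨d, hd⟩ : ∃ d, d = 1 / ((n : ℝ) - 2 * p) := ⟨_, rfl⟩
    have hd' : d * ((n : ℝ) - 2 * p) = 1 := by rw [hd]; field_simp
    rw [show p / ((n : ℝ) - 2 * p) = p * d by rw [hd]; ring,
      show ((n : ℝ) - p) / ((n : ℝ) - 2 * p) = ((n : ℝ) - p) * d by rw [hd]; ring]
    linear_combination k * ri * rj * K * n * x ^ 2 * p * (u * v1 - u1 * v) * hd'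
      - k * ri * rj * p * (α - x) * (1 - x ^ 2) * ((p + i) * ((n : ℝ) - p + i + 1)) * u * o2
      + k * ri * rj * p * (α - x) * (1 - x ^ 2) * ((p + j) * ((n : ℝ) - p + j + 1)) * v * o1

lemma comm_eo (n : ℕ) (hn : 1 ≤ n) (p : ℝ) (hp : 0 < p) (hpn : p < n)
    (N : ℕ) (α : ℝ) (hα : α ∈ Set.Ioo (-1 : ℝ) 1) (hα0 : α ≠ 0)
    (hp2 : (n : ℝ) - 2 * p ≠ 0) (i j : ℕ) (hi : i ≤ N) (hj : j ≤ N) :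
    Ilin n hn α hα (Bp n p (∑ s : Fin (2 * (N + 1)), C (L2n n p α N (2 * i) s) * qp0 n p s)
      (∑ s : Fin (2 * (N + 1)), C (L2n n p α N (2 * i) s) * qp1 n p s) (qp0 n p (2 * j + 1)) (qp1 n p (2 * j + 1))) =
    Ilin n hn α hα (Bp n p (∑ s : Fin (2 * (N + 1)), C (L2n n p α N (2 * j + 1) s) * qp0 n p s)
      (∑ s : Fin (2 * (N + 1)), C (L2n n p α N (2 * j + 1) s) * qp1 n p s) (qp0 n p (2 * i)) (qp1 n p (2 * i))) := by
  apply comm_aux n hn p hp hpn N α hα hα0 hp2 (2 * i) (2 * j + 1)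
    (C (1 / (α * p * ((n : ℝ) - p + 1)) * rr1 n p i * rr2 n p j * p * (n - p)) * (C α - X) *
      (C ((p + i) * ((n : ℝ) - p + i + 1)) * gU n i * gU n j))
  · simp
  · intro x
    simp only [Bp, eval_add, eval_sub, eval_mul, l0_even n p hp hpn hp2 N α hα0 i hi x,
      l0_odd n p hp hpn hp2 N α hα0 j hj x, l1_even n p hp hpn hp2 N α hα0 i hi x,
      l1_odd n p hp hpn hp2 N α hα0 j hj x, qp0_even, qp1_even, qp0_odd, qp1_odd, derivative_mul, derivative_add,
      derivative_sub, derivative_C, derivative_X, derivative_X_pow, derivative_one, eval_C, eval_X,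
      eval_pow, eval_one, eval_zero, Nat.cast_ofNat]
    generalize 1 / (α * p * ((n : ℝ) - p + 1)) = k
    generalize (derivative (gU n i)).eval x = u1 at *
    generalize (derivative (gU n j)).eval x = v1 at *
    generalize (gU n i).eval x = u at *
    generalize (gU n j).eval x = v at *
    generalize rr1 n p i = ri
    generalize rr2 n p j = rj
    generalize ((n : ℝ) - p + N + 1) * (p + N + 1) = K
    obtain ⟨d, hd⟩ : ∃ d, d = 1 / ((n : ℝ) - 2 * p) := ⟨_, rfl⟩
    have hd' : d * ((n : ℝ) - 2 * p) = 1 := by rw [hd]; field_simp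
    rw [show p / ((n : ℝ) - 2 * p) = p * d by rw [hd]; ring,
      show ((n : ℝ) - p) / ((n : ℝ) - 2 * p) = ((n : ℝ) - p) * d by rw [hd]; ring]
    linear_combination k * ri * rj * K * n * x ^ 2 *
        ((p * u + x * u1) * ((n - p) * v + x * v1) - u1 * v1) * hd'
      - k * ri * rj * K * x * v1 * ((p * x ^ 2 + (n - p)) * (p * u + x * u1) - n * x * u1) * hd'

lemma comm_oo (n : ℕ) (hn : 1 ≤ n) (p : ℝ) (hp : 0 < p) (hpn : p < n)
    (N : ℕ) (α : ℝ) (hα : α ∈ Set.Ioo (-1 : ℝ) 1) (hα0 : α ≠ 0)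
    (hp2 : (n : ℝ) - 2 * p ≠ 0) (i j : ℕ) (hi : i ≤ N) (hj : j ≤ N) :
    Ilin n hn α hα (Bp n p (∑ s : Fin (2 * (N + 1)), C (L2n n p α N (2 * i + 1) s) * qp0 n p s)
      (∑ s : Fin (2 * (N + 1)), C (L2n n p α N (2 * i + 1) s) * qp1 n p s) (qp0 n p (2 * j + 1)) (qp1 n p (2 * j + 1))) =
    Ilin n hn α hα (Bp n p (∑ s : Fin (2 * (N + 1)), C (L2n n p α N (2 * j + 1) s) * qp0 n p s)
      (∑ s : Fin (2 * (N + 1)), C (L2n n p α N (2 * j + 1) s) * qp1 n p s) (qp0 n p (2 * i + 1)) (qp1 n p (2 * i + 1))) := by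
  apply comm_aux n hn p hp hpn N α hα hα0 hp2 (2 * i + 1) (2 * j + 1) 0
  · simp
  · intro x
    simp only [Bp, eval_add, eval_sub, eval_mul, 
      l0_odd n p hp hpn hp2 N α hα0 j hj x, l0_odd n p hp hpn hp2 N α hα0 i hi x,
      l1_odd n p hp hpn hp2 N α hα0 j hj x, l1_odd n p hp hpn hp2 N α hα0 i hi x,
      qp0_odd, qp1_odd, derivative_zero, eval_C, eval_X,
      eval_pow, eval_one, eval_zero, Nat.cast_ofNat]
    ring


/-- `L_2` commutes with `M`. -/
theorem stmt_10 (n : ℕ) (hn : 1 ≤ n) (p : ℝ) (hp : 0 < p) (hpn : p < n)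
    (N : ℕ) (α : ℝ) (hα : α ∈ Set.Ioo (-1 : ℝ) 1) (hα0 : α ≠ 0)
    (hp2 : p ≠ (n : ℝ) / 2) :
    L2 n p α N * Mfull n p α N = Mfull n p α N * L2 n p α N := by
  have hp2' : (n : ℝ) - 2 * p ≠ 0 := by
    intro h; apply hp2; linarith
  have hM : ∀ r c, Mfull n p α N r c = Mfull n p α N c r := by
    intro r c
    rw [Mfull_eq n hn p hp hpn N α hα, Mfull_eq n hn p hp hpn N α hα, Bp_symm]
  ext r c
  have hr : (Mfull n p α N * L2 n p α N) r c = (L2 n p α N * Mfull n p α N) c r := by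
    rw [Matrix.mul_apply, Matrix.mul_apply]
    apply Finset.sum_congr rfl
    intro s _
    rw [hM r s, L2_symm n p α N s c, mul_comm]
  rw [hr, Matrix.mul_apply, Matrix.mul_apply, sum_M n hn p hp hpn N α hα,
    sum_M n hn p hp hpn N α hα]
  simp only [L2_eq]
  obtain ⟨r, hr'⟩ := r
  obtain ⟨c, hc'⟩ := c
  simp only []
  rcases Nat.even_or_odd' r with ⟨i, rfl | rfl⟩ <;> rcases Nat.even_or_odd' c with ⟨j, rfl | rfl⟩
  · exact comm_ee n hn p hp hpn N α hα hα0 hp2' i j (by omega) (by omega)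
  · exact comm_eo n hn p hp hpn N α hα hα0 hp2' i j (by omega) (by omega)
  · exact (comm_eo n hn p hp hpn N α hα hα0 hp2' j i (by omega) (by omega)).symm
  · exact comm_oo n hn p hp hpn N α hα hα0 hp2' i j (by omega) (by omega)
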